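/- The class of Boolean MSO queries on ordered unranked Σ-trees is precisely the class of Boolean queries defined by formulas of the modal μ-calculus L_μ over the two binary relations ≺_fc (first child) and ≺_ns (next sibling), where a sentence φ of L_μ defines the Boolean query { T : (T, ε) ⊨ φ }. -/

import Mathlib

namespace UnrankedTrees

/-! ### Unranked trees: tree domains and ordered unranked Σ-trees.
Nodes are finite strings over ℕ; a tree domain is a finite prefix-closed set
of nodes such that `s ++ [i] ∈ D` implies `s ++ [j] ∈ D` for all `j < i`. -/

abbrev Node : Type := List ℕ

/-- An ordered unranked tree over alphabet `A`: a tree domain with a labeling. -/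
structure UTree (A : Type) where
  dom : Finset Node
  nil_mem : ([] : Node) ∈ dom
  prefix_closed : ∀ ⦃s t : Node⦄, s ∈ dom → t <+: s → t ∈ dom
  sib_closed : ∀ ⦃s : Node⦄ ⦃i j : ℕ⦄, s ++ [i] ∈ dom → j < i → s ++ [j] ∈ dom
  label : Node → A

namespace UTree

variable {A : Type}

/-- The child relation `≺_ch`. -/
def childR (T : UTree A) (s t : Node) : Prop :=
  s ∈ T.dom ∧ t ∈ T.dom ∧ ∃ i : ℕ, t = s ++ [i]

/-- The descendant-or-self relation `≺*_ch` (the prefix relation). -/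
def descR (T : UTree A) (s t : Node) : Prop :=
  s ∈ T.dom ∧ t ∈ T.dom ∧ s <+: t

/-- The next-sibling relation `≺_ns`. -/
def nsR (T : UTree A) (s t : Node) : Prop :=
  s ∈ T.dom ∧ t ∈ T.dom ∧ ∃ (u : Node) (i : ℕ), s = u ++ [i] ∧ t = u ++ [i + 1]

/-- The sibling ordering `≺*_ns` (reflexive-transitive closure of next-sibling). -/
def sibR (T : UTree A) (s t : Node) : Prop :=
  s ∈ T.dom ∧ t ∈ T.dom ∧ ∃ (u : Node) (i j : ℕ), s = u ++ [i] ∧ t = u ++ [j] ∧ i ≤ j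

/-- The first-child relation `≺_fc`. -/
def firstChildR (T : UTree A) (s t : Node) : Prop :=
  s ∈ T.dom ∧ t ∈ T.dom ∧ t = s ++ [0]

/-- The number of children of a node. -/
noncomputable def childCount (T : UTree A) (s : Node) : ℕ :=
  Set.ncard {i : ℕ | s ++ [i] ∈ T.dom}

/-- The list of children of a node `s`, in sibling order: `s·0, …, s·(n-1)`. -/
noncomputable def childrenList (T : UTree A) (s : Node) : List Node :=
  (List.range (T.childCount s)).map fun i => s ++ [i]

/-- `s` is a leaf of `T`. -/
def isLeaf (T : UTree A) (s : Node) : Prop :=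
  s ∈ T.dom ∧ ∀ i : ℕ, s ++ [i] ∉ T.dom

/-- `s` has no next sibling in `T` (the root also counts as "last"). -/
def isLast (T : UTree A) (s : Node) : Prop :=
  s = [] ∨ ∃ (u : Node) (i : ℕ), s = u ++ [i] ∧ u ++ [i + 1] ∉ T.dom

end UTree

/-! ### MSO over ordered unranked trees.
First-order variables and monadic second-order variables are indexed by ℕ.
First-order quantifiers range over the nodes of the tree, set quantifiers over
sets of nodes of the tree. -/

inductive MSO (A : Type) : Type where
  | eq : ℕ → ℕ → MSO A
  | desc : ℕ → ℕ → MSO A               -- x ≺*_ch y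
  | sib : ℕ → ℕ → MSO A                -- x ≺*_ns y
  | lab : A → ℕ → MSO A                -- P_a(x)
  | mem : ℕ → ℕ → MSO A                -- X(x)
  | not : MSO A → MSO A
  | and : MSO A → MSO A → MSO A
  | exFO : ℕ → MSO A → MSO A
  | exSO : ℕ → MSO A → MSO A

namespace MSO

variable {A : Type}

def Sat (T : UTree A) (v : ℕ → Node) (V : ℕ → Set Node) : MSO A → Prop
  | .eq x y => v x = v y
  | .desc x y => T.descR (v x) (v y)
  | .sib x y => T.sibR (v x) (v y)
  | .lab a x => v x ∈ T.dom ∧ T.label (v x) = a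
  | .mem X x => v x ∈ V X
  | .not φ => ¬ Sat T v V φ
  | .and φ ψ => Sat T v V φ ∧ Sat T v V ψ
  | .exFO n φ => ∃ s ∈ T.dom, Sat T (Function.update v n s) V φ
  | .exSO n φ => ∃ S : Set Node, S ⊆ ↑T.dom ∧ Sat T v (Function.update V n S) φ

/-- `φ`, as a sentence, defines the set `L` of trees.  (Quantifying over all
valuations forces the truth value to be independent of the valuation, i.e.
`φ` behaves as a sentence.) -/
def DefinesB (φ : MSO A) (L : Set (UTree A)) : Prop :=
  ∀ (T : UTree A) (v : ℕ → Node) (V : ℕ → Set Node), T ∈ L ↔ Sat T v V φ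

/-- `φ`, as a formula whose only free variable is the first-order variable `0`,
defines the unary query `Q`. -/
def DefinesU (φ : MSO A) (Q : UTree A → Set Node) : Prop :=
  ∀ (T : UTree A) (v : ℕ → Node) (V : ℕ → Set Node) (s : Node), s ∈ T.dom →
    (s ∈ Q T ↔ Sat T (Function.update v 0 s) V φ)

end MSO

/-! ### The modal μ-calculus over trees, with relation symbols drawn from `R`
(and optional backward modalities). Set variables are indexed by ℕ. -/

inductive MuForm (A R : Type) : Type where
  | lab : A → MuForm A R
  | var : ℕ → MuForm A R
  | or : MuForm A R → MuForm A R → MuForm A R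
  | not : MuForm A R → MuForm A R
  | dia : R → MuForm A R → MuForm A R        -- ◇(E_r) φ
  | diaB : R → MuForm A R → MuForm A R       -- ◇(E_r⁻) φ (backward modality)
  | mu : ℕ → MuForm A R → MuForm A R

namespace MuForm

variable {A R : Type}

/-- Polarity check: `pol n φ true` says every free occurrence of the set
variable `n` in `φ` is positive (`false`: negative). -/
def pol (n : ℕ) : MuForm A R → Bool → Prop
  | .lab _, _ => True
  | .var k, b => b = true ∨ k ≠ n
  | .or φ ψ, b => pol n φ b ∧ pol n ψ b
  | .not φ, b => pol n φ (!b)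
  | .dia _ φ, b => pol n φ b
  | .diaB _ φ, b => pol n φ b
  | .mu k φ, b => k = n ∨ pol n φ b

/-- Well-formedness: in every subformula `μX.φ`, `X` occurs only positively. -/
def WF : MuForm A R → Prop
  | .lab _ => True
  | .var _ => True
  | .or φ ψ => WF φ ∧ WF ψ
  | .not φ => WF φ
  | .dia _ φ => WF φ
  | .diaB _ φ => WF φ
  | .mu k φ => pol k φ true ∧ WF φ

/-- `φ` contains no backward modality (plain μ-calculus `L_μ`). -/
def NoBack : MuForm A R → Prop
  | .lab _ => True
  | .var _ => True
  | .or φ ψ => NoBack φ ∧ NoBack ψ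
  | .not φ => NoBack φ
  | .dia _ φ => NoBack φ
  | .diaB _ _ => False
  | .mu _ φ => NoBack φ

/-- Semantics: the set of nodes of `T` at which a formula holds, where `rel`
interprets the relation symbols. -/
def sem (T : UTree A) (rel : R → Node → Node → Prop) (V : ℕ → Set Node) :
    MuForm A R → Set Node
  | .lab a => {s | s ∈ T.dom ∧ T.label s = a}
  | .var n => V n
  | .or φ ψ => sem T rel V φ ∪ sem T rel V ψ
  | .not φ => {s | s ∈ T.dom ∧ s ∉ sem T rel V φ}
  | .dia r φ => {s | s ∈ T.dom ∧ ∃ t : Node, rel r s t ∧ t ∈ sem T rel V φ}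
  | .diaB r φ => {s | s ∈ T.dom ∧ ∃ t : Node, rel r t s ∧ t ∈ sem T rel V φ}
  | .mu n φ =>
      {s | ∀ P : Set Node, sem T rel (Function.update V n P) φ ⊆ P → s ∈ P}

end MuForm

/-- The two relations of statement 6: first child and next sibling. -/
inductive FcNs : Type where
  | fc : FcNs
  | ns : FcNs

def FcNs.rel {A : Type} (T : UTree A) : FcNs → Node → Node → Prop
  | .fc => T.firstChildR
  | .ns => T.nsR

/-!
Read as a binary tree along `≺_fc` and `≺_ns`, an unranked tree is processed by bottom-up tree
automata.

From MSO to automata: if first-order variables are treated as singleton sets, every formula is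
built from regular conditions on the binary encoding by complement, intersection and projection,
and regular tree languages are closed under these; projection is the powerset construction.

From automata to the μ-calculus: the sets of nodes at which the run is in the state `q` form the
least (and only) solution of a system of equations with one unknown for each state. By Bekić's
principle a simultaneous least fixed point can be written with nested `μ`s. The right-hand sides
of the equations are positive and look only at the first child and the next sibling.

From the μ-calculus to MSO: a least fixed point is the intersection of all prefixed points, which
set quantifiers can express.
-/

/-! ### The first-child/next-sibling structure -/

section

variable {A : Type} {T : UTree A} {r : FcNs} {s t : Node}

namespace FcNs

theorem rel_left_mem (h : rel T r s t) : s ∈ T.dom := by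
  cases r <;> exact h.1

theorem rel_right_mem (h : rel T r s t) : t ∈ T.dom := by
  cases r <;> exact h.2.1

theorem rel_right_unique {t' : Node} (h : rel T r s t) (h' : rel T r s t') : t = t' := by
  cases r with
  | fc => exact h.2.2.trans h'.2.2.symm
  | ns =>
    obtain ⟨-, -, u, i, rfl, rfl⟩ := h
    obtain ⟨-, -, u', i', hs, rfl⟩ := h'
    simp_all

end FcNs

open FcNs Relation

namespace UTree

/-- A rank function on the nodes of `T` that decreases along first-child and next-sibling steps,
for recursion and induction along the binary structure. -/
def corank (T : UTree A) (s : Node) : ℕ :=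
  T.dom.sup (fun t => t.sum + t.length) - (s.sum + s.length)

theorem corank_lt_of_rel (h : rel T r s t) : T.corank t < T.corank s := by
  have hle := Finset.le_sup (f := fun t : Node => t.sum + t.length) (rel_right_mem h)
  have hlt : s.sum + s.length < t.sum + t.length := by
    cases r with
    | fc => obtain ⟨-, -, rfl⟩ := h; simp
    | ns => obtain ⟨-, -, u, i, rfl, rfl⟩ := h; simp
  simp only [corank] at *
  omega

theorem rel_induction (T : UTree A) {P : Node → Prop}
    (step : ∀ s, (∀ r t, rel T r s t → P t) → P s) (s : Node) : P s := by
  induction s using (measure T.corank).wf.induction with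
  | _ s ih => exact step s fun r t h => ih t (corank_lt_of_rel h)

/-- `T.Reach D s t`: the node `t` is reached from `s` by steps along the relations in `D`. -/
def Reach (T : UTree A) (D : Set FcNs) : Node → Node → Prop :=
  ReflTransGen fun s t => ∃ r ∈ D, rel T r s t

theorem Reach.mono {D D' : Set FcNs} (h : T.Reach D s t) (hD : D ⊆ D') : T.Reach D' s t :=
  ReflTransGen.mono (fun _ _ ⟨r, hr, h⟩ => ⟨r, hD hr, h⟩) _ _ h

theorem reach_iff {D : Set FcNs} :
    T.Reach D s t ↔ t = s ∨ ∃ r ∈ D, ∃ c, rel T r s c ∧ T.Reach D c t := by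
  rw [Reach, ReflTransGen.cases_head_iff, eq_comm]
  exact or_congr_right ⟨fun ⟨c, ⟨r, hr, h⟩, hc⟩ => ⟨r, hr, c, h, hc⟩,
    fun ⟨r, hr, c, h, hc⟩ => ⟨c, ⟨r, hr, h⟩, hc⟩⟩

theorem Reach.mem {D : Set FcNs} (h : T.Reach D s t) (hs : s ∈ T.dom) : t ∈ T.dom := by
  obtain rfl | ⟨c, -, r, -, hct⟩ := h.cases_tail
  exacts [hs, rel_right_mem hct]

theorem concat_mem_of_le {u : Node} {i j : ℕ} (h : u ++ [j] ∈ T.dom) (hij : i ≤ j) :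
    u ++ [i] ∈ T.dom :=
  hij.eq_or_lt.elim (fun e => e ▸ h) (T.sib_closed h)

theorem reach_ns_of_le {u : Node} {i j : ℕ} (h : u ++ [j] ∈ T.dom) (hij : i ≤ j) :
    T.Reach {.ns} (u ++ [i]) (u ++ [j]) := by
  induction j, hij using Nat.le_induction with
  | base => exact .refl
  | succ j _ ih =>
    have hj : u ++ [j] ∈ T.dom := concat_mem_of_le h j.le_succ
    exact (ih hj).tail ⟨.ns, rfl, hj, h, u, j, rfl, rfl⟩

theorem reach_of_prefix (ht : t ∈ T.dom) (h : s <+: t) : T.Reach Set.univ s t := by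
  obtain ⟨w, rfl⟩ := h
  induction w using List.reverseRecOn with
  | nil => rw [List.append_nil]; exact .refl
  | append_singleton w k ih =>
    rw [← List.append_assoc] at ht ⊢
    have hw : s ++ w ∈ T.dom := T.prefix_closed ht (List.prefix_append ..)
    have hfc : rel T .fc (s ++ w) (s ++ w ++ [0]) :=
      ⟨hw, concat_mem_of_le ht k.zero_le, rfl⟩
    exact ((ih hw).tail ⟨_, trivial, hfc⟩).trans
      ((reach_ns_of_le ht k.zero_le).mono (Set.subset_univ _))

theorem reach_nil_iff : T.Reach Set.univ [] t ↔ t ∈ T.dom :=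
  ⟨fun h => h.mem T.nil_mem, fun h => reach_of_prefix h List.nil_prefix⟩

theorem reach_concat_iff {u : Node} {i : ℕ} (hi : u ++ [i] ∈ T.dom) :
    T.Reach Set.univ (u ++ [i]) t ↔ t ∈ T.dom ∧ ∃ j w, i ≤ j ∧ t = u ++ j :: w := by
  constructor
  · intro h
    refine ⟨h.mem hi, ?_⟩
    induction h with
    | refl => exact ⟨i, [], le_rfl, rfl⟩
    | tail _ hst ih =>
      obtain ⟨j, w, hij, rfl⟩ := ih
      obtain ⟨_ | _, -, hst⟩ := hst
      · obtain ⟨-, -, rfl⟩ := hst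
        exact ⟨j, w ++ [0], hij, by simp⟩
      · obtain ⟨-, -, u', k, hs, rfl⟩ := hst
        obtain rfl | ⟨w, l, rfl⟩ := w.eq_nil_or_concat'
        · obtain ⟨rfl, hk⟩ := List.append_inj' hs rfl
          exact ⟨k + 1, [], by simp at hk; omega, rfl⟩
        · have hu : u ++ j :: w ++ [l] = u' ++ [k] := by simpa using hs
          obtain ⟨rfl, -⟩ := List.append_inj' hu rfl
          exact ⟨j, w ++ [k + 1], hij, by simp⟩
  · rintro ⟨ht, j, w, hij, rfl⟩
    have hprefix : u ++ [j] <+: u ++ j :: w := ⟨w, by simp⟩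
    exact ((reach_ns_of_le (T.prefix_closed ht hprefix) hij).mono (Set.subset_univ _)).trans
      (reach_of_prefix ht hprefix)

theorem sibR_iff_reach : T.sibR s t ↔ s ∈ T.dom ∧ s ≠ [] ∧ T.Reach {.ns} s t := by
  constructor
  · rintro ⟨hs, ht, u, i, j, rfl, rfl, hij⟩
    exact ⟨hs, by simp, reach_ns_of_le ht hij⟩
  · rintro ⟨hs, h0, h⟩
    obtain ⟨u, i, rfl⟩ := s.eq_nil_or_concat'.resolve_left h0
    refine ⟨hs, h.mem hs, ?_⟩
    induction h with
    | refl => exact ⟨u, i, i, rfl, rfl, le_rfl⟩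
    | tail _ hst ih =>
      obtain ⟨u', i', j, hu, rfl, hij⟩ := ih
      obtain ⟨_, rfl, -, -, u'', k, hk, rfl⟩ := hst
      obtain ⟨rfl, hjk⟩ := List.append_inj' hk rfl
      exact ⟨u', i', k + 1, hu, rfl, by simp at hjk; omega⟩

theorem reach_firstChild_iff {c : Node} (h : rel T .fc s c) :
    T.Reach Set.univ c t ↔ t ∈ T.dom ∧ s <+: t ∧ t ≠ s := by
  obtain ⟨-, hc, rfl⟩ := h
  rw [reach_concat_iff hc]
  refine and_congr_right fun _ => ⟨?_, ?_⟩
  · rintro ⟨j, w, -, rfl⟩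
    simp
  · rintro ⟨⟨_ | ⟨j, w⟩, rfl⟩, hne⟩
    · simp at hne
    · exact ⟨j, w, j.zero_le, rfl⟩

theorem not_prefix_of_reach_nextSibling {c : Node} (h : rel T .ns s c)
    (hct : T.Reach Set.univ c t) : ¬ s <+: t := by
  obtain ⟨-, hc, u, i, rfl, rfl⟩ := h
  obtain ⟨-, j, w, hij, rfl⟩ := (reach_concat_iff hc).1 hct
  simp
  omega

theorem ne_of_rel_of_reach {c : Node} (h : rel T r s c) (hct : T.Reach Set.univ c t) :
    t ≠ s := by
  cases r
  · exact ((reach_firstChild_iff h).1 hct).2.2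
  · exact fun hts => not_prefix_of_reach_nextSibling h hct (hts ▸ List.prefix_rfl)

theorem exists_firstChild_reach_iff :
    (∃ c, rel T .fc s c ∧ T.Reach Set.univ c t) ↔ T.descR s t ∧ t ≠ s := by
  constructor
  · rintro ⟨c, hc, hct⟩
    obtain ⟨ht, hst, hne⟩ := (reach_firstChild_iff hc).1 hct
    exact ⟨⟨rel_left_mem hc, ht, hst⟩, hne⟩
  · rintro ⟨⟨hs, ht, _ | ⟨j, w⟩, rfl⟩, hne⟩
    · simp at hne
    · have hj : s ++ [j] ∈ T.dom := T.prefix_closed ht ⟨w, by simp⟩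
      have hfc : rel T .fc s (s ++ [0]) := ⟨hs, concat_mem_of_le hj j.zero_le, rfl⟩
      exact ⟨_, hfc, (reach_firstChild_iff hfc).2 ⟨ht, List.prefix_append .., hne⟩⟩

end UTree

end

/-! ### The binary encoding -/

section

variable {A B C : Type} {T : UTree A} {r : FcNs} {s t : Node}

open FcNs

namespace UTree

open Classical in
/-- The part below `s` of the first-child/next-sibling encoding of `T` as a binary tree: left
subtrees are found along `≺_fc`, right subtrees along `≺_ns`, and the node `t` carries `b t`. -/
noncomputable def unfold (T : UTree A) (b : Node → B) (s : Node) : BinaryTree B :=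
  .node (b s) (if h : ∃ t, rel T .fc s t then T.unfold b h.choose else .nil)
    (if h : ∃ t, rel T .ns s t then T.unfold b h.choose else .nil)
termination_by T.corank s
decreasing_by all_goals exact corank_lt_of_rel h.choose_spec

open Classical in
/-- The subtree of the binary encoding of `T` that hangs off `s` along `r`. -/
noncomputable def branch (T : UTree A) (b : Node → B) (r : FcNs) (s : Node) : BinaryTree B :=
  if h : ∃ t, rel T r s t then T.unfold b h.choose else .nil

theorem unfold_eq (b : Node → B) (s : Node) :
    T.unfold b s = .node (b s) (T.branch b .fc s) (T.branch b .ns s) := by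
  rw [unfold]; rfl

theorem branch_of_rel (b : Node → B) (h : rel T r s t) : T.branch b r s = T.unfold b t := by
  have hex : ∃ t, rel T r s t := ⟨t, h⟩
  rw [branch, dif_pos hex, rel_right_unique hex.choose_spec h]

theorem branch_of_forall_not_rel (b : Node → B) (h : ∀ t, ¬ rel T r s t) :
    T.branch b r s = .nil :=
  dif_neg (not_exists.2 h)

theorem branch_iff {F : BinaryTree B → Prop} {b : Node → B} :
    F (T.branch b r s) ↔
      (∃ t, rel T r s t ∧ F (T.unfold b t)) ∨ ((∀ t, ¬ rel T r s t) ∧ F .nil) := by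
  by_cases hex : ∃ t, rel T r s t
  · obtain ⟨t, ht⟩ := hex
    rw [branch_of_rel b ht]
    refine ⟨fun h => .inl ⟨t, ht, h⟩, ?_⟩
    rintro (⟨t', ht', h⟩ | ⟨hnone, -⟩)
    exacts [rel_right_unique ht' ht ▸ h, absurd ht (hnone t)]
  · have hnone := not_exists.1 hex
    simp [branch_of_forall_not_rel b hnone, hnone]

theorem branch_congr {b b' : Node → B}
    (h : ∀ t, rel T r s t → T.unfold b t = T.unfold b' t) : T.branch b r s = T.branch b' r s := by
  by_cases hex : ∃ t, rel T r s t
  · obtain ⟨t, ht⟩ := hex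
    rw [branch_of_rel b ht, branch_of_rel b' ht, h t ht]
  · have hnone := not_exists.1 hex
    rw [branch_of_forall_not_rel b hnone, branch_of_forall_not_rel b' hnone]

theorem unfold_eq_unfold_iff {b b' : Node → B} {s : Node} :
    T.unfold b s = T.unfold b' s ↔ ∀ t, T.Reach Set.univ s t → b t = b' t := by
  induction s using T.rel_induction with
  | step s ih =>
    rw [unfold_eq, unfold_eq, BinaryTree.node.injEq]
    constructor
    · rintro ⟨hs, hfc, hns⟩ t ht
      obtain rfl | ⟨r, -, c, hc, hct⟩ := reach_iff.1 ht
      · exact hs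
      · refine (ih r c hc).1 ?_ t hct
        rw [← branch_of_rel b hc, ← branch_of_rel b' hc]
        cases r <;> assumption
    · intro h
      have hbranch (r : FcNs) : T.branch b r s = T.branch b' r s :=
        branch_congr fun c hc => (ih r c hc).2 fun t hct =>
          h t (reach_iff.2 (.inr ⟨r, trivial, c, hc, hct⟩))
      exact ⟨h s .refl, hbranch .fc, hbranch .ns⟩

theorem map_unfold (f : B → C) (b : Node → B) (s : Node) :
    (T.unfold b s).map f = T.unfold (f ∘ b) s := by
  induction s using T.rel_induction with
  | step s ih =>
    have hbranch (r : FcNs) : (T.branch b r s).map f = T.branch (f ∘ b) r s := by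
      by_cases hex : ∃ t, rel T r s t
      · obtain ⟨t, ht⟩ := hex
        rw [branch_of_rel _ ht, branch_of_rel _ ht, ih r t ht]
      · have hnone := not_exists.1 hex
        rw [branch_of_forall_not_rel _ hnone, branch_of_forall_not_rel _ hnone, BinaryTree.map]
    rw [unfold_eq, unfold_eq, BinaryTree.map, hbranch, hbranch, Function.comp_apply]

theorem map_branch (f : B → C) (b : Node → B) (r : FcNs) (s : Node) :
    (T.branch b r s).map f = T.branch (f ∘ b) r s := by
  have h := map_unfold (T := T) f b s
  rw [unfold_eq, unfold_eq, BinaryTree.map, BinaryTree.node.injEq] at h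
  cases r
  exacts [h.2.1, h.2.2]

/-- The nodes below the first child and those below the next sibling of `s` are distinct, so
labelings chosen separately on the two parts can be glued. -/
theorem exists_branch_eq_branch (s : Node) (a : B) (b₁ b₂ : Node → B) : ∃ b : Node → B,
    b s = a ∧ T.branch b .fc s = T.branch b₁ .fc s ∧ T.branch b .ns s = T.branch b₂ .ns s := by
  classical
  refine ⟨fun t => if t = s then a else if s <+: t then b₁ t else b₂ t, if_pos rfl, ?_, ?_⟩
  · refine branch_congr fun c hc => unfold_eq_unfold_iff.2 fun t hct => ?_
    obtain ⟨-, hst, hne⟩ := (reach_firstChild_iff hc).1 hct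
    simp only [hne, hst, if_true, if_false]
  · refine branch_congr fun c hc => unfold_eq_unfold_iff.2 fun t hct => ?_
    simp only [ne_of_rel_of_reach hc hct, not_prefix_of_reach_nextSibling hc hct, if_false]

theorem exists_unfold_of_map_eq {f : B → C} {c : Node → C} {s : Node} {t : BinaryTree B}
    (h : t.map f = T.unfold c s) : ∃ b : Node → B, t = T.unfold b s := by
  induction s using T.rel_induction generalizing t with
  | step s ih =>
    rw [unfold_eq] at h
    obtain _ | ⟨a, l, u⟩ := t
    · simp only [BinaryTree.map, reduceCtorEq] at h
    have hbranch {r : FcNs} {t : BinaryTree B} (ht : t.map f = T.branch c r s) :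
        ∃ b : Node → B, t = T.branch b r s := by
      by_cases hex : ∃ d, rel T r s d
      · obtain ⟨d, hd⟩ := hex
        obtain ⟨b, rfl⟩ := ih r d hd (ht.trans (branch_of_rel c hd))
        exact ⟨b, (branch_of_rel b hd).symm⟩
      · have hnone := not_exists.1 hex
        rw [branch_of_forall_not_rel c hnone] at ht
        obtain _ | _ := t
        · exact ⟨fun _ => a, (branch_of_forall_not_rel _ hnone).symm⟩
        · simp only [BinaryTree.map, reduceCtorEq] at ht
    simp only [BinaryTree.map, BinaryTree.node.injEq] at h
    obtain ⟨b₁, rfl⟩ := hbranch h.2.1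
    obtain ⟨b₂, rfl⟩ := hbranch h.2.2
    obtain ⟨b, rfl, hb₁, hb₂⟩ := exists_branch_eq_branch (T := T) s a b₁ b₂
    exact ⟨b, by rw [unfold_eq, hb₁, hb₂]⟩

end UTree

end

/-! ### Regular languages of binary trees -/

section

variable {A B C : Type} {L L' : Set (BinaryTree B)}

/-- Regular languages of binary trees, defined algebraically: membership of `t` is determined by
the value `f t` of a map `f` into a finite set that satisfies
`f (node a l r) = δ a (f l) (f r)`. Thus `f` is the run of a bottom-up tree automaton with
transition function `δ` and initial state `f nil`. -/
def IsRegularTreeLang (L : Set (BinaryTree B)) : Prop :=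
  ∃ (Q : Type) (_ : Finite Q) (f : BinaryTree B → Q) (δ : B → Q → Q → Q) (acc : Set Q),
    (∀ a l r, f (.node a l r) = δ a (f l) (f r)) ∧ ∀ t, t ∈ L ↔ f t ∈ acc

/-- The label at the root exists and satisfies `p`. -/
def RootIs (p : B → Prop) : BinaryTree B → Prop
  | .nil => False
  | .node a _ _ => p a

/-- Some nonempty subtree lies in `L` and can be reached by left steps (if `.fc ∈ D`) and right
steps (if `.ns ∈ D`). -/
def HasSubtree (D : Set FcNs) (L : Set (BinaryTree B)) : BinaryTree B → Prop
  | .nil => False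
  | .node a l r => .node a l r ∈ L ∨ (.fc ∈ D ∧ HasSubtree D L l) ∨ (.ns ∈ D ∧ HasSubtree D L r)

/-- Relabel the root by `g₀` and all other nodes by `g`. -/
def relabel (g₀ g : B → C) : BinaryTree B → BinaryTree C
  | .nil => .nil
  | .node a l r => .node (g₀ a) (l.map g) (r.map g)

namespace IsRegularTreeLang

theorem compl (h : IsRegularTreeLang L) : IsRegularTreeLang Lᶜ := by
  obtain ⟨Q, hQ, f, δ, acc, hf, hL⟩ := h
  exact ⟨Q, hQ, f, δ, accᶜ, hf, fun t => not_congr (hL t)⟩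

theorem inter (h : IsRegularTreeLang L) (h' : IsRegularTreeLang L') :
    IsRegularTreeLang (L ∩ L') := by
  obtain ⟨Q, _, f, δ, acc, hf, hL⟩ := h
  obtain ⟨Q', _, f', δ', acc', hf', hL'⟩ := h'
  exact ⟨Q × Q', inferInstance, fun t => (f t, f' t),
    fun a x y => (δ a x.1 y.1, δ' a x.2 y.2), acc ×ˢ acc',
    fun a l r => Prod.ext (hf a l r) (hf' a l r), fun t => and_congr (hL t) (hL' t)⟩

theorem union (h : IsRegularTreeLang L) (h' : IsRegularTreeLang L') :
    IsRegularTreeLang (L ∪ L') := by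
  rw [Set.union_eq_compl_compl_inter_compl]
  exact (h.compl.inter h'.compl).compl

theorem preimage_map {L : Set (BinaryTree C)} (h : IsRegularTreeLang L) (g : B → C) :
    IsRegularTreeLang {t | t.map g ∈ L} := by
  obtain ⟨Q, hQ, f, δ, acc, hf, hL⟩ := h
  exact ⟨Q, hQ, fun t => f (t.map g), fun a => δ (g a), acc, fun a l r => hf _ _ _,
    fun t => hL _⟩

/-- Projection, by the powerset construction: the new state of `t` is the set of all states of
preimages of `t`. -/
theorem image_map (h : IsRegularTreeLang L) (g : B → C) :
    IsRegularTreeLang (BinaryTree.map g '' L) := by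
  obtain ⟨Q, _, f, δ, acc, hf, hL⟩ := h
  refine ⟨Set Q, inferInstance, fun t => f '' {u | u.map g = t},
    fun c P R => {q | ∃ a, g a = c ∧ ∃ p ∈ P, ∃ r ∈ R, δ a p r = q},
    {P | (P ∩ acc).Nonempty}, fun c l r => ?_, fun t => ?_⟩
  · ext q
    constructor
    · rintro ⟨_ | ⟨a, u, v⟩, hmap, rfl⟩
      · simp [BinaryTree.map] at hmap
      · obtain ⟨rfl, rfl, rfl⟩ := BinaryTree.node.inj hmap
        exact ⟨a, rfl, f u, ⟨u, rfl, rfl⟩, f v, ⟨v, rfl, rfl⟩, (hf a u v).symm⟩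
    · rintro ⟨a, rfl, _, ⟨u, rfl, rfl⟩, _, ⟨v, rfl, rfl⟩, rfl⟩
      exact ⟨.node a u v, rfl, hf a u v⟩
  · constructor
    · rintro ⟨u, hu, rfl⟩
      exact ⟨f u, ⟨u, rfl, rfl⟩, (hL u).1 hu⟩
    · rintro ⟨_, ⟨u, rfl, rfl⟩, hu⟩
      exact ⟨u, (hL u).2 hu, rfl⟩

theorem rootIs (p : B → Prop) : IsRegularTreeLang {t | RootIs p t} :=
  ⟨Prop, inferInstance, RootIs p, fun a _ _ => p a, {q | q}, fun _ _ _ => rfl, fun _ => Iff.rfl⟩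

theorem preimage_left (h : IsRegularTreeLang L) : IsRegularTreeLang {t | t.left ∈ L} := by
  obtain ⟨Q, _, f, δ, acc, hf, hL⟩ := h
  exact ⟨Q × Q, inferInstance, fun t => (f t, f t.left), fun a x y => (δ a x.1 y.1, x.1),
    {x | x.2 ∈ acc}, fun a l r => Prod.ext (hf a l r) rfl, fun t => hL _⟩

theorem hasSubtree (h : IsRegularTreeLang L) (D : Set FcNs) :
    IsRegularTreeLang {t | HasSubtree D L t} := by
  obtain ⟨Q, _, f, δ, acc, hf, hL⟩ := h
  refine ⟨Q × Prop, inferInstance, fun t => (f t, HasSubtree D L t),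
    fun a x y => (δ a x.1 y.1, δ a x.1 y.1 ∈ acc ∨ (.fc ∈ D ∧ x.2) ∨ (.ns ∈ D ∧ y.2)),
    {x | x.2}, fun a l r => Prod.ext (hf a l r) ?_, fun t => Iff.rfl⟩
  simp only [HasSubtree, hL, hf]

theorem preimage_relabel {L : Set (BinaryTree C)} (h : IsRegularTreeLang L) (g₀ g : B → C) :
    IsRegularTreeLang {t | relabel g₀ g t ∈ L} := by
  obtain ⟨Q, _, f, δ, acc, hf, hL⟩ := h
  exact ⟨Q × Q, inferInstance, fun t => (f (t.map g), f (relabel g₀ g t)),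
    fun a x y => (δ (g a) x.1 y.1, δ (g₀ a) x.1 y.1), {x | x.2 ∈ acc},
    fun a l r => Prod.ext (hf _ _ _) (hf _ _ _), fun t => hL _⟩

end IsRegularTreeLang

section

variable {T : UTree A} {b : Node → B} {s : Node}

open UTree

theorem rootIs_unfold {p : B → Prop} : RootIs p (T.unfold b s) ↔ p (b s) := by
  rw [unfold_eq, RootIs]

theorem left_unfold : (T.unfold b s).left = T.branch b .fc s := by
  rw [unfold_eq, BinaryTree.left]

theorem relabel_unfold {g₀ g : B → C} {c : Node → C} (hroot : c s = g₀ (b s))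
    (hbelow : ∀ t, t ≠ s → c t = g (b t)) : relabel g₀ g (T.unfold b s) = T.unfold c s := by
  have hbranch (r : FcNs) : (T.branch b r s).map g = T.branch c r s := by
    rw [map_branch]
    exact branch_congr fun d hd => unfold_eq_unfold_iff.2 fun t hdt =>
      (hbelow t (ne_of_rel_of_reach hd hdt)).symm
  rw [unfold_eq, unfold_eq, relabel, hroot, hbranch, hbranch]

theorem hasSubtree_unfold {D : Set FcNs} :
    HasSubtree D L (T.unfold b s) ↔ ∃ t, T.Reach D s t ∧ T.unfold b t ∈ L := by
  induction s using T.rel_induction with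
  | step s ih =>
    have hbranch (r : FcNs) : HasSubtree D L (T.branch b r s) ↔
        ∃ c, FcNs.rel T r s c ∧ ∃ t, T.Reach D c t ∧ T.unfold b t ∈ L := by
      rw [branch_iff (F := HasSubtree D L)]
      simp only [HasSubtree, and_false, or_false]
      exact exists_congr fun c => and_congr_right fun hc => ih r c hc
    rw [unfold_eq, HasSubtree, ← unfold_eq, hbranch, hbranch]
    constructor
    · rintro (h | ⟨hD, c, hc, t, ht, h⟩ | ⟨hD, c, hc, t, ht, h⟩)
      · exact ⟨s, .refl, h⟩
      · exact ⟨t, reach_iff.2 (.inr ⟨_, hD, c, hc, ht⟩), h⟩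
      · exact ⟨t, reach_iff.2 (.inr ⟨_, hD, c, hc, ht⟩), h⟩
    · rintro ⟨t, ht, h⟩
      obtain rfl | ⟨_ | _, hD, c, hc, ht⟩ := reach_iff.1 ht
      · exact .inl h
      · exact .inr (.inl ⟨hD, c, hc, t, ht, h⟩)
      · exact .inr (.inr ⟨hD, c, hc, t, ht, h⟩)

theorem hasSubtree_branch {D : Set FcNs} {r : FcNs} :
    HasSubtree D L (T.branch b r s) ↔
      ∃ c, FcNs.rel T r s c ∧ ∃ t, T.Reach D c t ∧ T.unfold b t ∈ L := by
  rw [branch_iff (F := HasSubtree D L)]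
  simp only [hasSubtree_unfold, HasSubtree, and_false, or_false]

end

end

/-! ### From MSO to regular tree languages -/

section

variable {A ι : Type}

namespace UTree

/-- The label of `s` together with the indices of the sets `W i` that contain `s`. -/
def letter (T : UTree A) (W : ι → Set Node) (s : Node) : A × Set ι :=
  (T.label s, {i | s ∈ W i})

/-- The binary encoding of the tree `T` expanded by the unary predicates `W`. -/
noncomputable def code (T : UTree A) (W : ι → Set Node) : BinaryTree (A × Set ι) :=
  T.unfold (T.letter W) []

end UTree

open UTree

/-- A property of trees expanded by unary predicates is recognizable if the codes of the
expanded trees that have it are separated from the other codes by a regular language. -/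
def Recognizable (P : UTree A → (ι → Set Node) → Prop) : Prop :=
  ∃ L, IsRegularTreeLang L ∧ ∀ T W, P T W ↔ T.code W ∈ L

namespace Recognizable

variable {P P' : UTree A → (ι → Set Node) → Prop}

theorem congr (h : Recognizable P) (hiff : ∀ T W, P' T W ↔ P T W) : Recognizable P' := by
  obtain ⟨L, hL, hP⟩ := h
  exact ⟨L, hL, fun T W => (hiff T W).trans (hP T W)⟩

theorem not (h : Recognizable P) : Recognizable fun T W => ¬ P T W := by
  obtain ⟨L, hL, hP⟩ := h
  exact ⟨Lᶜ, hL.compl, fun T W => not_congr (hP T W)⟩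

theorem and (h : Recognizable P) (h' : Recognizable P') :
    Recognizable fun T W => P T W ∧ P' T W := by
  obtain ⟨L, hL, hP⟩ := h
  obtain ⟨L', hL', hP'⟩ := h'
  exact ⟨L ∩ L', hL.inter hL', fun T W => and_congr (hP T W) (hP' T W)⟩

/-- The letter `x` without the information about the `k`-th set. -/
def eraseTrack (k : ι) (x : A × Set ι) : A × Set ι := (x.1, x.2 \ {k})

theorem eraseTrack_letter_update [DecidableEq ι] (T : UTree A) (W : ι → Set Node) (k : ι)
    (S : Set Node) :
    eraseTrack k ∘ T.letter (Function.update W k S) = eraseTrack k ∘ T.letter W := by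
  funext s
  refine Prod.ext rfl (Set.ext fun i => and_congr_left fun hi => ?_)
  simp only [letter, Set.mem_ofPred_eq, Function.update_of_ne hi]

theorem eq_letter_update [DecidableEq ι] {T : UTree A} {W : ι → Set Node} {k : ι}
    {b : Node → A × Set ι} {s : Node} {S : Set Node} (hS : s ∈ S ↔ k ∈ (b s).2)
    (h : eraseTrack k (b s) = eraseTrack k (T.letter W s)) :
    T.letter (Function.update W k S) s = b s := by
  obtain ⟨h₁, h₂⟩ := Prod.ext_iff.1 h
  refine Prod.ext h₁.symm (Set.ext fun i => ?_)
  obtain rfl | hi := eq_or_ne i k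
  · simp only [letter, Set.mem_ofPred_eq, Function.update_self, hS]
  · have := Set.ext_iff.1 h₂ i
    simpa [eraseTrack, letter, Function.update_of_ne hi, hi] using this.symm

theorem exists_update [DecidableEq ι] (h : Recognizable P) (k : ι) :
    Recognizable fun T W => ∃ S ⊆ (T.dom : Set Node), P T (Function.update W k S) := by
  obtain ⟨L, hL, hP⟩ := h
  refine ⟨{t | t.map (eraseTrack k) ∈ BinaryTree.map (eraseTrack k) '' L},
    (hL.image_map _).preimage_map _, fun T W => ⟨?_, ?_⟩⟩
  · rintro ⟨S, -, hS⟩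
    refine ⟨_, (hP T _).1 hS, ?_⟩
    rw [code, code, map_unfold, map_unfold, eraseTrack_letter_update]
  · rintro ⟨u, hu, hmap⟩
    rw [code, map_unfold] at hmap
    obtain ⟨b, rfl⟩ := exists_unfold_of_map_eq hmap
    rw [map_unfold, unfold_eq_unfold_iff] at hmap
    refine ⟨{s | s ∈ T.dom ∧ k ∈ (b s).2}, fun s hs => hs.1, (hP T _).2 ?_⟩
    rw [code, unfold_eq_unfold_iff.2 fun s hs => eq_letter_update ?_ (hmap s hs)]
    · exact hu
    · exact and_iff_right (reach_nil_iff.1 hs)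

theorem exists_letter (p : A × Set ι → Prop) :
    Recognizable fun T W => ∃ s ∈ T.dom, p (T.letter W s) :=
  ⟨_, (IsRegularTreeLang.rootIs p).hasSubtree Set.univ, fun T W => by
    simp only [Set.mem_ofPred_eq, code, hasSubtree_unfold, rootIs_unfold, reach_nil_iff]⟩

theorem exists_mem_inter (k l : ι) :
    Recognizable fun (T : UTree A) W => ∃ s ∈ T.dom, s ∈ W k ∧ s ∈ W l :=
  exists_letter fun x => k ∈ x.2 ∧ l ∈ x.2

theorem exists_descR (k l : ι) :
    Recognizable fun (T : UTree A) W => ∃ s ∈ W k, ∃ t ∈ W l, T.descR s t := by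
  have hk := IsRegularTreeLang.rootIs fun x : A × Set ι => k ∈ x.2
  have hl := IsRegularTreeLang.rootIs fun x : A × Set ι => l ∈ x.2
  refine ⟨_, (hk.inter (hl.union (hl.hasSubtree .univ).preimage_left)).hasSubtree .univ,
    fun T W => ?_⟩
  simp only [Set.mem_ofPred_eq, code, hasSubtree_unfold, Set.mem_inter_iff, Set.mem_union,
    rootIs_unfold, left_unfold, hasSubtree_branch, reach_nil_iff, letter]
  constructor
  · rintro ⟨s, hsk, t, htl, hst⟩
    obtain rfl | hne := eq_or_ne t s
    · exact ⟨t, hst.1, hsk, .inl htl⟩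
    · obtain ⟨c, hc, hct⟩ := exists_firstChild_reach_iff.2 ⟨hst, hne⟩
      exact ⟨s, hst.1, hsk, .inr ⟨c, hc, t, hct, htl⟩⟩
  · rintro ⟨s, hs, hsk, hsl | ⟨c, hc, t, hct, htl⟩⟩
    · exact ⟨s, hsk, s, hsl, hs, hs, List.prefix_rfl⟩
    · exact ⟨s, hsk, t, htl, (exists_firstChild_reach_iff.1 ⟨c, hc, hct⟩).1⟩

theorem exists_sibR (k l : ι) :
    Recognizable fun (T : UTree A) W => ∃ s ∈ W k, ∃ t ∈ W l, T.sibR s t := by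
  have hk := IsRegularTreeLang.rootIs fun x : A × Set ι => k ∈ x.2
  have hl := IsRegularTreeLang.rootIs fun x : A × Set ι => l ∈ x.2
  -- The root has no siblings, so the search for `s` starts below it.
  refine ⟨_, ((hk.inter (hl.hasSubtree {.ns})).hasSubtree .univ).preimage_left, fun T W => ?_⟩
  simp only [Set.mem_ofPred_eq, code, hasSubtree_unfold, Set.mem_inter_iff, rootIs_unfold,
    left_unfold, hasSubtree_branch, sibR_iff_reach, letter]
  constructor
  · rintro ⟨s, hsk, t, htl, hs, hne, hst⟩
    obtain ⟨c, hc, hcs⟩ :=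
      exists_firstChild_reach_iff.2 ⟨⟨T.nil_mem, hs, List.nil_prefix⟩, hne⟩
    exact ⟨c, hc, s, hcs, hsk, t, hst, htl⟩
  · rintro ⟨c, hc, s, hcs, hsk, t, hst, htl⟩
    obtain ⟨⟨-, hs, -⟩, hne⟩ := exists_firstChild_reach_iff.1 ⟨c, hc, hcs⟩
    exact ⟨s, hsk, t, htl, hs, hne, hst⟩

/-- A nonempty set is a singleton if no set, stored in the spare track `f`, splits it. -/
theorem isSingleton {k f : ι} (hkf : k ≠ f) :
    Recognizable fun (T : UTree A) W => ∃ s, W k ∩ T.dom = {s} := by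
  classical
  have hsplit : Recognizable fun (T : UTree A) (W : ι → Set Node) => ∃ S ⊆ (T.dom : Set Node),
      (∃ s ∈ T.dom, s ∈ W k ∧ s ∈ S) ∧ ∃ s ∈ T.dom, s ∈ W k ∧ s ∉ S := by
    simpa only [letter, Set.mem_ofPred_eq, Function.update_self, Function.update_of_ne hkf] using
      ((exists_letter fun x : A × Set ι => k ∈ x.2 ∧ f ∈ x.2).and
        (exists_letter fun x => k ∈ x.2 ∧ f ∉ x.2)).exists_update f
  refine ((exists_letter fun x : A × Set ι => k ∈ x.2).and hsplit.not).congr fun T W => ?_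
  rw [Set.exists_eq_singleton_iff_nonempty_subsingleton]
  refine and_congr ⟨fun ⟨s, hk, hs⟩ => ⟨s, hs, hk⟩, fun ⟨s, hs, hk⟩ => ⟨s, hk, hs⟩⟩ ⟨?_, ?_⟩
  · rintro hsub ⟨S, -, ⟨s, hs, hsk, hsS⟩, t, ht, htk, htS⟩
    exact htS (hsub ⟨hsk, hs⟩ ⟨htk, ht⟩ ▸ hsS)
  · rintro hns s ⟨hsk, hs⟩ t ⟨htk, ht⟩
    by_contra hne
    exact hns ⟨{s}, Set.singleton_subset_iff.2 hs, ⟨s, hs, hsk, rfl⟩, t, ht, htk, Ne.symm hne⟩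

theorem exists_update_singleton [DecidableEq ι] (h : Recognizable P) {k f : ι} (hkf : k ≠ f) :
    Recognizable fun T W => ∃ s ∈ T.dom, P T (Function.update W k {s}) := by
  refine (((isSingleton hkf).and h).exists_update k).congr fun T W => ?_
  simp only [Function.update_self]
  constructor
  · rintro ⟨s, hs, hP⟩
    have hsub : {s} ⊆ (T.dom : Set Node) := Set.singleton_subset_iff.2 hs
    exact ⟨{s}, hsub, ⟨s, Set.inter_eq_left.2 hsub⟩, hP⟩
  · rintro ⟨S, hS, ⟨s, hs⟩, hP⟩
    rw [Set.inter_eq_left.2 hS] at hs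
    subst hs
    exact ⟨s, Set.singleton_subset_iff.1 hS, hP⟩

end Recognizable

namespace MSO

/-- A valuation as a family of sets of nodes: first-order variables become singletons. -/
def tracks (v : ℕ → Node) (V : ℕ → Set Node) : ℕ ⊕ ℕ → Set Node :=
  Sum.elim (fun x => {v x}) V

theorem tracks_update_left (v : ℕ → Node) (V : ℕ → Set Node) (x : ℕ) (s : Node) :
    tracks (Function.update v x s) V = Function.update (tracks v V) (.inl x) {s} := by
  rw [tracks, tracks, ← Sum.elim_update_left]
  exact congrArg (Sum.elim · V) (Function.comp_update (fun s : Node => ({s} : Set Node)) v x s)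

theorem tracks_update_right (v : ℕ → Node) (V : ℕ → Set Node) (X : ℕ) (S : Set Node) :
    tracks v (Function.update V X S) = Function.update (tracks v V) (.inr X) S := by
  rw [tracks, tracks, Sum.elim_update_right]

theorem exists_recognizable (φ : MSO A) : ∃ P, Recognizable P ∧
    ∀ (T : UTree A) (v : ℕ → Node) (V : ℕ → Set Node), (∀ x, v x ∈ T.dom) →
      (φ.Sat T v V ↔ P T (tracks v V)) := by
  induction φ with
  | eq x y =>
    refine ⟨_, Recognizable.exists_mem_inter (.inl x) (.inl y), fun T v V hv => ?_⟩
    simp [Sat, tracks, hv, eq_comm]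
  | desc x y =>
    refine ⟨_, Recognizable.exists_descR (.inl x) (.inl y), fun T v V _ => ?_⟩
    simp [Sat, tracks]
  | sib x y =>
    refine ⟨_, Recognizable.exists_sibR (.inl x) (.inl y), fun T v V _ => ?_⟩
    simp [Sat, tracks]
  | lab a x =>
    refine ⟨_, Recognizable.exists_letter fun b => b.1 = a ∧ .inl x ∈ b.2, fun T v V hv => ?_⟩
    simp [Sat, tracks, letter, hv]
  | mem X x =>
    refine ⟨_, Recognizable.exists_mem_inter (.inl x) (.inr X), fun T v V hv => ?_⟩
    simp [Sat, tracks, hv]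
  | not φ ih =>
    obtain ⟨P, hP, h⟩ := ih
    exact ⟨_, hP.not, fun T v V hv => not_congr (h T v V hv)⟩
  | and φ ψ ih₁ ih₂ =>
    obtain ⟨P₁, hP₁, h₁⟩ := ih₁
    obtain ⟨P₂, hP₂, h₂⟩ := ih₂
    exact ⟨_, hP₁.and hP₂, fun T v V hv => and_congr (h₁ T v V hv) (h₂ T v V hv)⟩
  | exFO n φ ih =>
    obtain ⟨P, hP, h⟩ := ih
    refine ⟨_, hP.exists_update_singleton (k := .inl n) (f := .inr 0) Sum.inl_ne_inr,
      fun T v V hv => exists_congr fun s => and_congr_right fun hs => ?_⟩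
    rw [h T _ V (Function.forall_update_iff v (fun _ t => t ∈ T.dom) |>.2 ⟨hs, fun x _ => hv x⟩),
      tracks_update_left]
  | exSO n φ ih =>
    obtain ⟨P, hP, h⟩ := ih
    refine ⟨_, hP.exists_update (.inr n),
      fun T v V hv => exists_congr fun S => and_congr_right fun _ => ?_⟩
    rw [h T v _ hv, tracks_update_right]

theorem exists_isRegularTreeLang_of_definesB {φ : MSO A} {L : Set (UTree A)}
    (h : φ.DefinesB L) :
    ∃ K, IsRegularTreeLang K ∧ ∀ T : UTree A, T ∈ L ↔ T.unfold T.label [] ∈ K := by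
  obtain ⟨P, ⟨K, hK, hPK⟩, hP⟩ := φ.exists_recognizable
  let W : ℕ ⊕ ℕ → Set Node := tracks (fun _ => []) fun _ => ∅
  refine ⟨_, hK.preimage_relabel (fun a : A => (a, {i | [] ∈ W i})) fun a => (a, ∅),
    fun T => ?_⟩
  have hbelow (s : Node) (hs : s ≠ []) : T.letter W s = (T.label s, ∅) := by
    refine Prod.ext rfl (Set.eq_empty_of_forall_notMem ?_)
    rintro (x | X) <;> simp [letter, W, tracks, hs]
  rw [h, hP T (fun _ => []) (fun _ => ∅) fun _ => T.nil_mem, hPK, code]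
  exact iff_of_eq (congrArg (· ∈ K) (relabel_unfold rfl hbelow).symm)

end MSO

end

/-! ### From regular tree languages to the μ-calculus -/

section Bekic
variable {ι α : Type*} [DecidableEq ι] [CompleteLattice α]

/-- The system of equations `X p = Φ X p` in which the unknowns in `S` have been replaced by the
parameters `v`. -/
def freeze (Φ : (ι → α) →o ι → α) (S : Finset ι) (v : ι → α) : (ι → α) →o ι → α where
  toFun X p := if p ∈ S then v p else Φ X p
  monotone' X Y hXY p := by
    by_cases hp : p ∈ S
    · simp only [hp, if_true, le_rfl]
    · simpa only [hp, if_false] using Φ.monotone hXY p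

variable {Φ : (ι → α) →o ι → α} {S : Finset ι} {v : ι → α} {q : ι}

theorem freeze_apply_of_mem (hq : q ∈ S) (X : ι → α) : freeze Φ S v X q = v q := if_pos hq

theorem freeze_apply_of_notMem (hq : q ∉ S) (X : ι → α) : freeze Φ S v X q = Φ X q := if_neg hq

theorem freeze_empty : freeze Φ ∅ v = Φ :=
  OrderHom.ext _ _ <| funext₂ fun X p => freeze_apply_of_notMem (Finset.notMem_empty p) X

theorem lfp_freeze_of_mem (hq : q ∈ S) : (freeze Φ S v).lfp q = v q := by
  rw [← OrderHom.map_lfp, freeze_apply_of_mem hq]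

theorem lfp_freeze_of_notMem (hq : q ∉ S) :
    (freeze Φ S v).lfp q = Φ (freeze Φ S v).lfp q := by
  conv_lhs => rw [← OrderHom.map_lfp, freeze_apply_of_notMem hq]

/-- Bekić's principle: a component of a simultaneous least fixed point is obtained by first
solving for the remaining unknowns with that component as a parameter. -/
theorem lfp_freeze_eq_sInf (hq : q ∉ S) : (freeze Φ S v).lfp q =
    sInf {a | Φ (freeze Φ (insert q S) (Function.update v q a)).lfp q ≤ a} := by
  have hqS : q ∈ insert q S := Finset.mem_insert_self q S
  apply le_antisymm
  · refine le_sInf fun a ha => ?_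
    suffices h : (freeze Φ S v).lfp ≤ (freeze Φ (insert q S) (Function.update v q a)).lfp by
      simpa only [lfp_freeze_of_mem hqS, Function.update_self] using h q
    refine OrderHom.lfp_le _ fun p => ?_
    by_cases hp : p ∈ S
    · have hpq : p ≠ q := fun h => hq (h ▸ hp)
      rw [freeze_apply_of_mem hp, lfp_freeze_of_mem (Finset.mem_insert_of_mem hp),
        Function.update_of_ne hpq]
    rw [freeze_apply_of_notMem hp]
    obtain rfl | hpq := eq_or_ne p q
    · rwa [lfp_freeze_of_mem hqS, Function.update_self]
    · rw [← lfp_freeze_of_notMem (by simp [hp, hpq])]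
  · refine sInf_le ?_
    suffices h : (freeze Φ (insert q S) (Function.update v q ((freeze Φ S v).lfp q))).lfp ≤
        (freeze Φ S v).lfp from (Φ.monotone h q).trans (lfp_freeze_of_notMem hq).ge
    refine OrderHom.lfp_le _ fun p => ?_
    obtain rfl | hpq := eq_or_ne p q
    · rw [freeze_apply_of_mem hqS, Function.update_self]
    by_cases hp : p ∈ S
    · rw [freeze_apply_of_mem (Finset.mem_insert_of_mem hp), Function.update_of_ne hpq,
        lfp_freeze_of_mem hp]
    · rw [freeze_apply_of_notMem (by simp [hp, hpq]), ← lfp_freeze_of_notMem hp]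

end Bekic

namespace MuForm

section

variable {A R Q κ : Type} {T : UTree A} {rel : R → Node → Node → Prop} {V : ℕ → Set Node}
  {s : Node} {φ ψ : MuForm A R}

/-- Well-formed formulas without backward modalities in which every free variable occurs only
positively. -/
def Admissible (φ : MuForm A R) : Prop := φ.WF ∧ φ.NoBack ∧ ∀ n, φ.pol n true

/-- Falsity. -/
def ff : MuForm A R := .mu 0 (.var 0)

/-- Conjunction. -/
def conj (φ ψ : MuForm A R) : MuForm A R := .not (.or (.not φ) (.not ψ))

/-- The disjunction of the formulas `φ i` for `i ∈ S`. -/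
noncomputable def bigOr [Finite κ] (S : Set κ) (φ : κ → MuForm A R) : MuForm A R :=
  (S.toFinite.toFinset.toList.map φ).foldr .or ff

theorem sem_ff : (ff : MuForm A R).sem T rel V = ∅ :=
  Set.eq_empty_of_forall_notMem fun _ hs => hs ∅ (by simp [sem])

theorem mem_sem_conj :
    s ∈ (conj φ ψ).sem T rel V ↔ s ∈ T.dom ∧ s ∈ φ.sem T rel V ∧ s ∈ ψ.sem T rel V := by
  simp only [conj, sem, Set.mem_ofPred_eq, Set.mem_union]
  tauto

theorem mem_sem_bigOr [Finite κ] {S : Set κ} {φ : κ → MuForm A R} :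
    s ∈ (bigOr S φ).sem T rel V ↔ ∃ i ∈ S, s ∈ (φ i).sem T rel V := by
  have hfoldr (l : List κ) : s ∈ ((l.map φ).foldr .or ff).sem T rel V ↔
      ∃ i ∈ l, s ∈ (φ i).sem T rel V := by
    induction l with
    | nil => simp [sem_ff]
    | cons i l ih => simp [sem, ih]
  simpa [bigOr] using hfoldr S.toFinite.toFinset.toList

theorem admissible_ff : (ff : MuForm A R).Admissible := by simp [Admissible, ff, WF, NoBack, pol]

theorem admissible_lab (a : A) : (.lab a : MuForm A R).Admissible := by
  simp [Admissible, WF, NoBack, pol]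

theorem admissible_var (n : ℕ) : (.var n : MuForm A R).Admissible := by
  simp [Admissible, WF, NoBack, pol]

theorem Admissible.or (hφ : φ.Admissible) (hψ : ψ.Admissible) : (φ.or ψ).Admissible :=
  ⟨⟨hφ.1, hψ.1⟩, ⟨hφ.2.1, hψ.2.1⟩, fun n => ⟨hφ.2.2 n, hψ.2.2 n⟩⟩

theorem Admissible.conj (hφ : φ.Admissible) (hψ : ψ.Admissible) : (φ.conj ψ).Admissible :=
  hφ.or hψ

theorem Admissible.dia (hφ : φ.Admissible) (r : R) : (φ.dia r).Admissible := hφ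

theorem Admissible.mu (hφ : φ.Admissible) (n : ℕ) : (φ.mu n).Admissible :=
  ⟨⟨hφ.2.2 n, hφ.1⟩, hφ.2.1, fun m => .inr (hφ.2.2 m)⟩

theorem Admissible.bigOr [Finite κ] {S : Set κ} {φ : κ → MuForm A R}
    (hφ : ∀ i, (φ i).Admissible) : (bigOr S φ).Admissible := by
  rw [MuForm.bigOr]
  induction S.toFinite.toFinset.toList with
  | nil => exact admissible_ff
  | cons i l ih => exact (hφ i).or ih

/-- Nested least fixed points that solve the system of equations `X q = body q X`, where the
unknown `X q` is represented by the set variable `e q`; the unknowns in `S` are parameters. -/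
def solve [Finite Q] [DecidableEq Q] (e : Q → ℕ)
    (body : Q → (Q → MuForm A R) → MuForm A R) (S : Finset Q) (q : Q) : MuForm A R :=
  if _ : q ∈ S then .var (e q) else .mu (e q) (body q (solve e body (insert q S)))
termination_by ((S : Set Q)ᶜ).ncard
decreasing_by
  exact Set.ncard_lt_ncard
    (compl_lt_compl_iff_lt.2 (Finset.coe_ssubset.2 (Finset.ssubset_insert ‹_›)))

variable [Finite Q] [DecidableEq Q] {e : Q → ℕ} {body : Q → (Q → MuForm A R) → MuForm A R}

theorem admissible_solve (hbody : ∀ q G, (∀ p, (G p).Admissible) → (body q G).Admissible)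
    (S : Finset Q) (q : Q) : (solve e body S q).Admissible := by
  induction S, q using solve.induct with
  | case1 S q hq =>
    rw [solve, dif_pos hq]
    exact admissible_var _
  | case2 S q hq ih =>
    rw [solve, dif_neg hq]
    exact (hbody q _ ih).mu _

theorem sem_solve {Φ : (Q → Set Node) →o Q → Set Node} (he : Function.Injective e)
    (hbody : ∀ q G V, (body q G).sem T rel V = Φ (fun p => (G p).sem T rel V) q)
    (S : Finset Q) (q : Q) (V : ℕ → Set Node) :
    (solve e body S q).sem T rel V = (freeze Φ S (V ∘ e)).lfp q := by
  induction S, q using solve.induct generalizing V with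
  | case1 S q hq =>
    rw [solve, dif_pos hq, lfp_freeze_of_mem hq]
    rfl
  | case2 S q hq ih =>
    rw [solve, dif_neg hq, lfp_freeze_eq_sInf hq]
    simp only [sem, hbody, ih, Function.update_comp_eq_of_injective V he]
    rfl

end

end MuForm

section Transition
variable {A Q : Type} {T : UTree A} {s : Node} {r : FcNs}

open UTree

/-- The `r`-successor of `s` is assigned the state `p` by the family `X`; a missing successor has
the state `q₀`. -/
def SuccIs (T : UTree A) (q₀ : Q) (X : Q → Set Node) (r : FcNs) (p : Q) (s : Node) : Prop :=
  (∃ t, FcNs.rel T r s t ∧ t ∈ X p) ∨ ((∀ t, ¬ FcNs.rel T r s t) ∧ q₀ = p)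

/-- One step of the bottom-up automaton with transition function `δ` and initial state `q₀` on
the binary encoding of `T`. -/
def transition (T : UTree A) (q₀ : Q) (δ : A → Q → Q → Q) :
    (Q → Set Node) →o Q → Set Node where
  toFun X q := {s | s ∈ T.dom ∧ ∃ a p p', δ a p p' = q ∧ T.label s = a ∧
    SuccIs T q₀ X .fc p s ∧ SuccIs T q₀ X .ns p' s}
  monotone' X Y hXY q s := by
    have hsucc {r p} : SuccIs T q₀ X r p s → SuccIs T q₀ Y r p s :=
      Or.imp_left fun ⟨t, hst, ht⟩ => ⟨t, hst, hXY p ht⟩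
    rintro ⟨hs, a, p, p', hδ, ha, hfc, hns⟩
    exact ⟨hs, a, p, p', hδ, ha, hsucc hfc, hsucc hns⟩

theorem lfp_transition {f : BinaryTree A → Q} {δ : A → Q → Q → Q}
    (hf : ∀ a l r, f (.node a l r) = δ a (f l) (f r)) :
    (transition T (f .nil) δ).lfp = fun q => {s | s ∈ T.dom ∧ f (T.unfold T.label s) = q} := by
  set run : Q → Set Node := fun q => {s | s ∈ T.dom ∧ f (T.unfold T.label s) = q}
  have hsucc {r p s} : SuccIs T (f .nil) run r p s ↔ f (T.branch T.label r s) = p := by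
    rw [branch_iff (F := fun t => f t = p), SuccIs]
    exact or_congr_left (exists_congr fun t => and_congr_right fun h =>
      and_iff_right (FcNs.rel_right_mem h))
  apply le_antisymm
  · refine OrderHom.lfp_le _ fun q s => ?_
    rintro ⟨hs, a, p, p', rfl, rfl, hfc, hns⟩
    exact ⟨hs, by rw [unfold_eq, hf, hsucc.1 hfc, hsucc.1 hns]⟩
  · refine OrderHom.le_lfp _ fun X hX q s => ?_
    rintro ⟨hs, rfl⟩
    induction s using T.rel_induction with
    | step s ih =>
      have hstep (r : FcNs) : SuccIs T (f .nil) X r (f (T.branch T.label r s)) s :=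
        (hsucc.2 rfl).imp_left fun ⟨t, hst, ht⟩ => ⟨t, hst, ht.2 ▸ ih r t hst ht.1⟩
      refine hX _ ⟨hs, _, _, _, ?_, rfl, hstep .fc, hstep .ns⟩
      rw [unfold_eq, hf]

namespace MuForm

open Classical in
/-- The formula expressing `SuccIs`, where the state `p` is described by the formula `G p`. -/
noncomputable def succIs (q₀ : Q) (G : Q → MuForm A FcNs) (r : FcNs) (p : Q) : MuForm A FcNs :=
  .or (.dia r (G p)) (if q₀ = p then .not (.dia r (.not ff)) else ff)

/-- The formula for the state `q` in the system of equations given by `transition`. -/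
noncomputable def step [Finite A] [Finite Q] (q₀ : Q) (δ : A → Q → Q → Q) (q : Q)
    (G : Q → MuForm A FcNs) : MuForm A FcNs :=
  bigOr {x : A × Q × Q | δ x.1 x.2.1 x.2.2 = q} fun x =>
    conj (.lab x.1) (conj (succIs q₀ G .fc x.2.1) (succIs q₀ G .ns x.2.2))

theorem admissible_succIs {q₀ p : Q} {G : Q → MuForm A FcNs} (hG : (G p).Admissible) :
    (succIs q₀ G r p).Admissible := by
  refine (hG.dia r).or ?_
  split_ifs
  · simp [Admissible, ff, WF, NoBack, pol]
  · exact admissible_ff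

theorem mem_sem_succIs {q₀ p : Q} {G : Q → MuForm A FcNs} {V : ℕ → Set Node} :
    s ∈ (succIs q₀ G r p).sem T (FcNs.rel T) V ↔
      s ∈ T.dom ∧ SuccIs T q₀ (fun q => (G q).sem T (FcNs.rel T) V) r p s := by
  by_cases h : q₀ = p
  · have hleaf : (s ∈ T.dom → ∀ t, FcNs.rel T r s t → t ∉ T.dom) ↔ ∀ t, ¬ FcNs.rel T r s t :=
      ⟨fun hs t ht => hs (FcNs.rel_left_mem ht) t ht (FcNs.rel_right_mem ht),
        fun hs _ t ht => absurd ht (hs t)⟩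
    simp [succIs, SuccIs, sem, sem_ff, h, hleaf, ← and_or_left]
  · simp [succIs, SuccIs, sem, sem_ff, h]

variable [Finite A] [Finite Q] {q₀ : Q} {δ : A → Q → Q → Q}

theorem admissible_step {q : Q} {G : Q → MuForm A FcNs} (hG : ∀ p, (G p).Admissible) :
    (step q₀ δ q G).Admissible :=
  .bigOr fun _ => (admissible_lab _).conj
    ((admissible_succIs (hG _)).conj (admissible_succIs (hG _)))

theorem sem_step (q : Q) (G : Q → MuForm A FcNs) (V : ℕ → Set Node) :
    (step q₀ δ q G).sem T (FcNs.rel T) V =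
      transition T q₀ δ (fun p => (G p).sem T (FcNs.rel T) V) q := by
  ext s
  simp only [step, mem_sem_bigOr, mem_sem_conj, mem_sem_succIs, sem, transition,
    Set.mem_ofPred_eq, Prod.exists]
  constructor
  · rintro ⟨a, p, p', hδ, hs, ⟨-, ha⟩, -, ⟨-, hfc⟩, -, hns⟩
    exact ⟨hs, a, p, p', hδ, ha, hfc, hns⟩
  · rintro ⟨hs, a, p, p', hδ, ha, hfc, hns⟩
    exact ⟨a, p, p', hδ, hs, ⟨hs, ha⟩, hs, ⟨hs, hfc⟩, hs, hns⟩

end MuForm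

theorem exists_muForm_of_isRegularTreeLang [Finite A] {K : Set (BinaryTree A)}
    (hK : IsRegularTreeLang K) :
    ∃ φ : MuForm A FcNs, φ.WF ∧ φ.NoBack ∧ ∀ (T : UTree A) (V : ℕ → Set Node),
      T.unfold T.label [] ∈ K ↔ [] ∈ φ.sem T (FcNs.rel T) V := by
  classical
  obtain ⟨Q, _, f, δ, acc, hf, hK⟩ := hK
  obtain ⟨e, he⟩ := exists_injective_nat Q
  let state : Q → MuForm A FcNs := MuForm.solve e (MuForm.step (f .nil) δ) ∅
  have hstate (q : Q) : (state q).Admissible :=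
    MuForm.admissible_solve (fun _ _ => MuForm.admissible_step) ∅ q
  have hφ : (MuForm.bigOr acc state).Admissible := .bigOr hstate
  refine ⟨_, hφ.1, hφ.2.1, fun T V => ?_⟩
  simp only [MuForm.mem_sem_bigOr, state, MuForm.sem_solve he MuForm.sem_step, freeze_empty,
    lfp_transition hf, Set.mem_ofPred_eq, T.nil_mem, true_and, exists_eq_right', hK]

end Transition

/-! ### From the μ-calculus to MSO -/

namespace UTree
variable {A : Type} {T : UTree A} {s t : Node}

theorem firstChildR_iff : T.firstChildR s t ↔ (T.descR s t ∧ s ≠ t) ∧ ∀ z ∈ T.dom,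
    (T.descR s z ∧ T.descR z t → z = s ∨ z = t) ∧ (T.sibR z t → z = t) := by
  constructor
  · rintro ⟨hs, ht, rfl⟩
    refine ⟨⟨⟨hs, ht, List.prefix_append ..⟩, by simp⟩, fun z _ => ⟨?_, ?_⟩⟩
    · rintro ⟨⟨-, -, w, rfl⟩, -, -, hw⟩
      rw [List.prefix_append_right_inj] at hw
      rcases List.prefix_cons_iff.1 hw with rfl | ⟨w', rfl, hw'⟩
      · simp
      · simp [List.prefix_nil.1 hw']
    · rintro ⟨-, -, u, i, j, rfl, h, hij⟩
      obtain ⟨rfl, h0⟩ := List.append_inj' h rfl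
      simp only [List.cons.injEq, and_true] at h0
      obtain rfl : i = 0 := by omega
      rfl
  · rintro ⟨⟨⟨hs, ht, w, rfl⟩, hne⟩, hmin⟩
    obtain _ | ⟨i, w⟩ := w
    · simp at hne
    have hi : s ++ [i] ∈ T.dom := T.prefix_closed ht ⟨w, by simp⟩
    obtain rfl : w = [] := by
      have := (hmin _ hi).1 ⟨⟨hs, hi, List.prefix_append ..⟩, hi, ht, w, by simp⟩
      simpa [eq_comm] using this
    have h0 : s ++ [0] ∈ T.dom := concat_mem_of_le hi i.zero_le
    exact ⟨hs, ht, ((hmin _ h0).2 ⟨h0, hi, s, 0, i, rfl, rfl, i.zero_le⟩).symm⟩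

theorem nsR_iff : T.nsR s t ↔ (T.sibR s t ∧ s ≠ t) ∧ ∀ z ∈ T.dom,
    T.sibR s z ∧ T.sibR z t → z = s ∨ z = t := by
  constructor
  · rintro ⟨hs, ht, u, i, rfl, rfl⟩
    refine ⟨⟨⟨hs, ht, u, i, i + 1, rfl, rfl, i.le_succ⟩, by simp⟩, ?_⟩
    rintro z - ⟨⟨-, -, u', a, b, h, rfl, hab⟩, -, -, u'', c, d, h', h'', hcd⟩
    obtain ⟨rfl, hi⟩ := List.append_inj' h rfl
    obtain ⟨rfl, hb⟩ := List.append_inj' h' rfl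
    obtain ⟨-, hd⟩ := List.append_inj' h'' rfl
    simp only [List.cons.injEq, and_true] at hi hb hd
    obtain rfl | rfl : b = i ∨ b = i + 1 := by omega
    exacts [.inl rfl, .inr rfl]
  · rintro ⟨⟨⟨hs, ht, u, i, j, rfl, rfl, hij⟩, hne⟩, hmin⟩
    have hlt : i < j := hij.lt_of_ne (by rintro rfl; exact hne rfl)
    have hi : u ++ [i + 1] ∈ T.dom := concat_mem_of_le ht hlt
    have hz := hmin _ hi ⟨⟨hs, hi, u, i, i + 1, rfl, rfl, i.le_succ⟩,
      hi, ht, u, i + 1, j, rfl, rfl, hlt⟩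
    exact ⟨hs, ht, u, i, rfl, (hz.resolve_left (by simp)).symm⟩

end UTree

namespace MSO
variable {A : Type} {φ ψ : MSO A} {T : UTree A} {v : ℕ → Node} {V : ℕ → Set Node}

/-- Disjunction, expressed by negation and conjunction. -/
def or (φ ψ : MSO A) : MSO A := .not (.and (.not φ) (.not ψ))

/-- Implication, expressed by negation and conjunction. -/
def imp (φ ψ : MSO A) : MSO A := .not (.and φ (.not ψ))

/-- First-order universal quantification, expressed as the dual of `MSO.exFO`. -/
def allFO (n : ℕ) (φ : MSO A) : MSO A := .not (.exFO n (.not φ))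

/-- Universal quantification over sets, expressed as the dual of `MSO.exSO`. -/
def allSO (n : ℕ) (φ : MSO A) : MSO A := .not (.exSO n (.not φ))

@[simp] theorem sat_or : (φ.or ψ).Sat T v V ↔ φ.Sat T v V ∨ ψ.Sat T v V := by
  simp only [or, Sat]; tauto

@[simp] theorem sat_imp : (φ.imp ψ).Sat T v V ↔ (φ.Sat T v V → ψ.Sat T v V) := by
  simp only [imp, Sat]; tauto

@[simp] theorem sat_allFO {n : ℕ} :
    (allFO n φ).Sat T v V ↔ ∀ s ∈ T.dom, φ.Sat T (Function.update v n s) V := by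
  simp [allFO, Sat]

@[simp] theorem sat_allSO {n : ℕ} :
    (allSO n φ).Sat T v V ↔ ∀ S : Set Node, S ⊆ T.dom → φ.Sat T v (Function.update V n S) := by
  simp [allSO, Sat]

/-- The first-child and next-sibling relations between `x` and `y` in MSO, as the covering
relations of the descendant and sibling orders; `z` is used as a bound variable. -/
def relForm (x y z : ℕ) : FcNs → MSO A
  | .fc => .and (.and (.desc x y) (.not (.eq x y))) (allFO z (.and
      (imp (.and (.desc x z) (.desc z y)) (or (.eq z x) (.eq z y))) (imp (.sib z y) (.eq z y))))
  | .ns => .and (.and (.sib x y) (.not (.eq x y)))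
      (allFO z (imp (.and (.sib x z) (.sib z y)) (or (.eq z x) (.eq z y))))

theorem sat_relForm {x y z : ℕ} (hx : x ≠ z) (hy : y ≠ z) (r : FcNs) :
    (relForm x y z r).Sat T v V ↔ FcNs.rel T r (v x) (v y) := by
  cases r
  · simp [relForm, Sat, hx, hy, FcNs.rel, UTree.firstChildR_iff]
  · simp [relForm, Sat, hx, hy, FcNs.rel, UTree.nsR_iff]

end MSO

namespace MuForm
variable {A : Type} {T : UTree A} {v : ℕ → Node} {V V' : ℕ → Set Node}

/-- The standard translation of the μ-calculus into MSO. The formula `φ.toMSO k` expresses that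
`φ` holds at the node assigned to the first-order variable `k`; its bound first-order variables
are larger than `k`, and set variables keep their indices. -/
def toMSO : MuForm A FcNs → ℕ → MSO A
  | .lab a, k => .lab a k
  | .var n, k => .mem n k
  | .or φ ψ, k => (φ.toMSO k).or (ψ.toMSO k)
  | .not φ, k => .not (φ.toMSO k)
  | .dia r φ, k => .exFO (k + 1) (.and (.relForm k (k + 1) (k + 2) r) (φ.toMSO (k + 1)))
  | .diaB r φ, k => .exFO (k + 1) (.and (.relForm (k + 1) k (k + 2) r) (φ.toMSO (k + 1)))
  | .mu n φ, k =>
    .allSO n (.imp (.allFO (k + 1) (.imp (φ.toMSO (k + 1)) (.mem n (k + 1)))) (.mem n k))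

theorem mem_sem_mu_iff {n : ℕ} {φ : MuForm A FcNs} {F : Set Node → Set Node} {s : Node}
    (hs : s ∈ T.dom)
    (hF : ∀ S P : Set Node, (∀ t ∈ T.dom, t ∈ S ↔ t ∈ P) →
      ∀ t ∈ T.dom, t ∈ F S ↔ t ∈ φ.sem T (FcNs.rel T) (Function.update V n P)) :
    s ∈ (φ.mu n).sem T (FcNs.rel T) V ↔
      ∀ S : Set Node, S ⊆ T.dom → (∀ t ∈ T.dom, t ∈ F S → t ∈ S) → s ∈ S := by
  constructor
  · intro h S _ hS
    -- Adding all strings outside the domain makes `S` closed under the operator.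
    have hSP : ∀ t ∈ T.dom, t ∈ S ↔ t ∈ {t | t ∈ T.dom → t ∈ S} := fun t ht => by simp [ht]
    exact h {t | t ∈ T.dom → t ∈ S} (fun t hφ ht => hS t ht ((hF _ _ hSP t ht).2 hφ)) hs
  · intro h P hP
    have hSP : ∀ t ∈ T.dom, t ∈ P ∩ T.dom ↔ t ∈ P := fun t ht => by simp [ht]
    exact (h (P ∩ T.dom) Set.inter_subset_right fun t ht hFt =>
      ⟨hP ((hF _ _ hSP t ht).1 hFt), ht⟩).1

/-- The valuations of the set variables need to agree on the domain only, because fixed points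
range over arbitrary sets of strings, but set quantifiers over subsets of the domain. -/
theorem sat_toMSO (φ : MuForm A FcNs) {k : ℕ} {s : Node} (hs : s ∈ T.dom)
    (hV : ∀ n, ∀ t ∈ T.dom, t ∈ V n ↔ t ∈ V' n) :
    (φ.toMSO k).Sat T (Function.update v k s) V ↔ s ∈ φ.sem T (FcNs.rel T) V' := by
  induction φ generalizing k s v V V' with
  | lab a => simp [toMSO, MSO.Sat, sem]
  | var n => simpa [toMSO, MSO.Sat, sem] using hV n s hs
  | or φ ψ ihφ ihψ => simp [toMSO, sem, ihφ hs hV, ihψ hs hV]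
  | not φ ih => simp [toMSO, MSO.Sat, sem, hs, ih hs hV]
  | dia r φ ih =>
    simp only [toMSO, MSO.Sat, sem, Set.mem_ofPred_eq, hs, true_and]
    refine exists_congr fun t => ⟨fun ⟨ht, hr, hφ⟩ => ⟨?_, (ih ht hV).1 hφ⟩, fun ⟨hr, hφ⟩ => ?_⟩
    · simpa [MSO.sat_relForm] using hr
    · have ht := FcNs.rel_right_mem hr
      exact ⟨ht, by simpa [MSO.sat_relForm] using hr, (ih ht hV).2 hφ⟩
  | diaB r φ ih =>
    simp only [toMSO, MSO.Sat, sem, Set.mem_ofPred_eq, hs, true_and]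
    refine exists_congr fun t => ⟨fun ⟨ht, hr, hφ⟩ => ⟨?_, (ih ht hV).1 hφ⟩, fun ⟨hr, hφ⟩ => ?_⟩
    · simpa [MSO.sat_relForm] using hr
    · have ht := FcNs.rel_left_mem hr
      exact ⟨ht, by simpa [MSO.sat_relForm] using hr, (ih ht hV).2 hφ⟩
  | mu n φ ih =>
    simp only [toMSO, MSO.sat_allSO, MSO.sat_imp, MSO.sat_allFO, MSO.Sat, Function.update_self]
    refine (mem_sem_mu_iff (F := fun S => {t | (φ.toMSO (k + 1)).Sat T _
      (Function.update V n S)}) hs fun S P hSP t ht => ih ht fun m u hu => ?_).symm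
    obtain rfl | hm := eq_or_ne m n
    · simpa using hSP u hu
    · simpa [hm] using hV m u hu

/-- Truth of `φ` at the root, the only node without a proper ancestor, as an MSO sentence. -/
def toSentence (φ : MuForm A FcNs) : MSO A :=
  .exFO 0 (.and (.allFO 1 (.imp (.desc 1 0) (.eq 1 0))) (φ.toMSO 0))

theorem sat_toSentence (φ : MuForm A FcNs) :
    φ.toSentence.Sat T v V ↔ [] ∈ φ.sem T (FcNs.rel T) V := by
  simp only [toSentence, MSO.Sat, MSO.sat_allFO, MSO.sat_imp, Function.update_self,
    Function.update_of_ne zero_ne_one]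
  constructor
  · rintro ⟨s, hs, hroot, h⟩
    obtain rfl := hroot [] T.nil_mem ⟨T.nil_mem, hs, List.nil_prefix⟩
    exact (φ.sat_toMSO hs fun _ _ _ => Iff.rfl).1 h
  · exact fun h => ⟨[], T.nil_mem, fun t _ ht => List.prefix_nil.1 ht.2.2,
      (φ.sat_toMSO T.nil_mem fun _ _ _ => Iff.rfl).2 h⟩

end MuForm

/-- The Boolean MSO queries on ordered unranked Σ-trees are
precisely the Boolean queries defined by sentences of the μ-calculus
`L_μ[≺_fc, ≺_ns]`, where `φ` defines `{ T : (T, ε) ⊨ φ }`. -/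
theorem mso_iff_mu_calculus (A : Type) [Fintype A] (L : Set (UTree A)) :
    (∃ φ : MSO A, φ.DefinesB L) ↔
      ∃ φ : MuForm A FcNs, φ.WF ∧ φ.NoBack ∧
        ∀ (T : UTree A) (V : ℕ → Set Node),
          T ∈ L ↔ ([] : Node) ∈ φ.sem T (FcNs.rel T) V := by
  constructor
  · rintro ⟨φ, hφ⟩
    obtain ⟨K, hK, hL⟩ := MSO.exists_isRegularTreeLang_of_definesB hφ
    obtain ⟨ψ, hWF, hNoBack, hψ⟩ := exists_muForm_of_isRegularTreeLang hK
    exact ⟨ψ, hWF, hNoBack, fun T V => (hL T).trans (hψ T V)⟩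
  · rintro ⟨φ, -, -, hφ⟩
    exact ⟨φ.toSentence, fun T v V => (hφ T V).trans φ.sat_toSentence.symm⟩

end UnrankedTrees
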